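/- Let A be an n×n matrix and b a column n-vector over the max-plus semiring. If there exists a nonnegative integer p such that A^p = ℰ (the all-ε matrix), then the implicit equation x = A ⊗ x ⊕ b in the n-vector x has the unique solution x = ⊕_{i=0}^{p-1} A^i ⊗ b. -/

import Mathlib

/-!
The map `f = (A ⊗ ·)` on vectors preserves finite joins, including the empty one, and `A^k ⊗ ·` is
its `k`-th iterate (`mpMulVec_mpPow`). With `S k = ⊕_{j<k} f^j b`, join preservation gives
`S (k + 1) = f (S k) ⊕ b` (`sup_iterate_succ`), and any solution of `x = f x ⊕ b` unfolds to
`x = f^k x ⊕ S k` (`eq_iterate_sup`). If `A^p = ℰ`, then `f^p` is constantly `ε`. Hence a solution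
equals `S p`, and conversely `f (S p) ⊕ b = S (p + 1) = S p ⊕ f^p b = S p`.
-/

/-- The max-plus semiring carrier: `ℝ ∪ {ε}` with `ε = ⊥ = -∞`.
Addition `⊕` is `max` (= `⊔`), multiplication `⊗` is `+`
(with `⊥` absorbing), null element `⊥`, identity element `0`. -/
abbrev MP : Type := WithBot ℝ

/-- Max-plus matrix product: `(A ⊗ B) i j = max_k (A i k + B k j)`. -/
noncomputable def mpMul {m : Type*} [Fintype m] (A B : Matrix m m MP) : Matrix m m MP :=
  fun i j => Finset.univ.sup fun k => A i k + B k j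

/-- Max-plus matrix-vector product: `(A ⊗ x) i = max_k (A i k + x k)`. -/
noncomputable def mpMulVec {m : Type*} [Fintype m] (A : Matrix m m MP) (x : m → MP) : m → MP :=
  fun i => Finset.univ.sup fun k => A i k + x k

/-- Entrywise max-plus matrix addition `A ⊕ B`. -/
noncomputable def mpMatAdd {m : Type*} (A B : Matrix m m MP) : Matrix m m MP :=
  fun i j => A i j ⊔ B i j

/-- Entrywise max-plus vector addition `x ⊕ y`. -/
noncomputable def mpVecAdd {m : Type*} (x y : m → MP) : m → MP :=
  fun i => x i ⊔ y i

/-- The max-plus identity matrix `E`: `e = 0` on the diagonal, `ε` elsewhere. -/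
noncomputable def mpId (m : Type*) [DecidableEq m] : Matrix m m MP :=
  fun i j => if i = j then (0 : MP) else ⊥

/-- The all-`ε` matrix `ℰ`. -/
noncomputable def mpZero (m : Type*) : Matrix m m MP := fun _ _ => (⊥ : MP)

/-- Max-plus matrix powers: `A^0 = E`, `A^(p+1) = A^p ⊗ A`. -/
noncomputable def mpPow {m : Type*} [Fintype m] [DecidableEq m] (A : Matrix m m MP) : ℕ → Matrix m m MP
  | 0 => mpId m
  | p + 1 => mpMul (mpPow A p) A

/-- The max-plus sum of powers `⊕_{i=0}^{p-1} A^i` (entrywise; the empty sum is `ℰ`). -/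
noncomputable def mpSumPow {m : Type*} [Fintype m] [DecidableEq m] (A : Matrix m m MP) (p : ℕ) :
    Matrix m m MP :=
  fun i j => (Finset.range p).sup fun k => mpPow A k i j

theorem mp_add_sup {ι : Type*} (s : Finset ι) (a : MP) (g : ι → MP) :
    a + s.sup g = s.sup fun i => a + g i :=
  Finset.apply_sup_eq_sup_comp (a + ·) (fun x y => (max_add_add_left a x y).symm)
    (WithBot.add_bot a)

theorem mp_sup_add {ι : Type*} (s : Finset ι) (a : MP) (g : ι → MP) :
    s.sup g + a = s.sup fun i => g i + a :=
  Finset.apply_sup_eq_sup_comp (· + a) (fun x y => (max_add_add_right x y a).symm)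
    (WithBot.bot_add a)

theorem mpMulVec_sup {m : Type*} [Fintype m] (A : Matrix m m MP) (x y : m → MP) :
    mpMulVec A (x ⊔ y) = mpMulVec A x ⊔ mpMulVec A y := by
  funext i
  simp only [mpMulVec, Pi.sup_apply, ← Finset.sup_sup]
  exact Finset.sup_congr rfl fun k _ => (max_add_add_left (A i k) (x k) (y k)).symm

theorem mpMulVec_bot {m : Type*} [Fintype m] (A : Matrix m m MP) :
    mpMulVec A ⊥ = ⊥ := by
  funext i
  simp [mpMulVec]

theorem mpMulVec_mpZero {m : Type*} [Fintype m] (x : m → MP) :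
    mpMulVec (mpZero m) x = ⊥ := by
  funext i
  simp [mpMulVec, mpZero]

theorem mpMulVec_mpId {m : Type*} [Fintype m] [DecidableEq m] (x : m → MP) :
    mpMulVec (mpId m) x = x := by
  funext i
  apply le_antisymm
  · refine Finset.sup_le fun k _ => ?_
    by_cases h : i = k
    · subst h; simp [mpId]
    · simp [mpId, h]
  · have h := Finset.le_sup (f := fun k => mpId m i k + x k) (Finset.mem_univ i)
    simpa [mpId, mpMulVec] using h

theorem mpMulVec_mpMul {m : Type*} [Fintype m] (A B : Matrix m m MP) (x : m → MP) :
    mpMulVec (mpMul A B) x = mpMulVec A (mpMulVec B x) := by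
  funext i
  simp only [mpMulVec, mpMul, mp_add_sup, mp_sup_add]
  rw [Finset.sup_comm]
  simp only [add_assoc]

theorem mpMulVec_mpPow {m : Type*} [Fintype m] [DecidableEq m] (A : Matrix m m MP) (k : ℕ)
    (x : m → MP) : mpMulVec (mpPow A k) x = (mpMulVec A)^[k] x := by
  induction k generalizing x with
  | zero => exact mpMulVec_mpId x
  | succ k ih =>
    rw [mpPow, mpMulVec_mpMul, ih, Function.iterate_succ_apply]

theorem mpMulVec_mpSumPow {m : Type*} [Fintype m] [DecidableEq m] (A : Matrix m m MP) (p : ℕ)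
    (b : m → MP) :
    mpMulVec (mpSumPow A p) b = (Finset.range p).sup fun k => (mpMulVec A)^[k] b := by
  funext i
  simp only [← mpMulVec_mpPow, Finset.sup_apply]
  simp only [mpMulVec, mpSumPow, mp_sup_add]
  rw [Finset.sup_comm]

/-- Horner-type recursion for the partial sums `⊕_{j<k} A^j ⊗ b`. -/
theorem sup_iterate_succ {m : Type*} [Fintype m] (A : Matrix m m MP) (b : m → MP) (k : ℕ) :
    ((Finset.range (k + 1)).sup fun j => (mpMulVec A)^[j] b) =
      mpMulVec A ((Finset.range k).sup fun j => (mpMulVec A)^[j] b) ⊔ b := by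
  induction k with
  | zero => simp [mpMulVec_bot]
  | succ k ih =>
    have hS := Finset.sup_insert (s := Finset.range k) (f := fun j => (mpMulVec A)^[j] b) (b := k)
    rw [← Finset.range_add_one] at hS
    conv_rhs => rw [hS, mpMulVec_sup, sup_assoc, ← ih]
    rw [Finset.range_add_one, Finset.sup_insert, Function.iterate_succ_apply']

/-- Substituting the equation into itself `k` times. -/
theorem eq_iterate_sup {m : Type*} [Fintype m] (A : Matrix m m MP) (b x : m → MP)
    (hx : x = mpMulVec A x ⊔ b) (k : ℕ) :
    x = (mpMulVec A)^[k] x ⊔ (Finset.range k).sup fun j => (mpMulVec A)^[j] b := by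
  induction k with
  | zero => simp
  | succ k ih =>
    rw [sup_iterate_succ, Function.iterate_succ_apply', ← sup_assoc, ← mpMulVec_sup, ← ih]
    exact hx

/-- If `A^p = ℰ` for some nonnegative integer `p`, then the implicit max-plus
equation `x = A ⊗ x ⊕ b` has the unique solution `x = ⊕_{i=0}^{p-1} A^i ⊗ b`. -/
theorem stmt0 {n : ℕ} (A : Matrix (Fin n) (Fin n) MP) (b : Fin n → MP)
    (p : ℕ) (hp : mpPow A p = mpZero (Fin n)) :
    ∀ x : Fin n → MP,
      x = mpVecAdd (mpMulVec A x) b ↔ x = mpMulVec (mpSumPow A p) b := by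
  intro x
  have hbot : ∀ y, (mpMulVec A)^[p] y = ⊥ := fun y => by
    rw [← mpMulVec_mpPow, hp, mpMulVec_mpZero]
  rw [mpMulVec_mpSumPow]
  change x = mpMulVec A x ⊔ b ↔ _
  constructor
  · intro hx
    have h := eq_iterate_sup A b x hx p
    rwa [hbot, bot_sup_eq] at h
  · rintro rfl
    rw [← sup_iterate_succ, Finset.range_add_one, Finset.sup_insert, hbot, bot_sup_eq]
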